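/- Take k = 3, n = 7 and the weight vectors (1,1,0), (1,0,1), (0,1,1) each taken twice, together with (1,1,1) taken three times, in the Vandermonde-quotient construction. Then for every δ ≥ 0 the power series F_δ ∈ ℚ[[x₁,x₂,x₃]] is divisible by Δ = (x₁−x₂)(x₁−x₃)(x₂−x₃), and the resulting series I₀(q) = Σ_{δ≥0} a_δ q^δ with a_δ = (F_δ/Δ)(0) satisfies {3721θ⁴ − 61q(3029θ⁴+5572θ³+4677θ²+1891θ+305) + q²(1215215θ⁴+3428132θ³+4267228θ²+2572675θ+611586) − 81q³(39370θ⁴+140178θ³+206807θ²+142191θ+37332) + 6561q⁴(566θ⁴+2230θ³+3356θ²+2241θ+558) − 1594323q⁵(θ+1)⁴} I₀ = 0. -/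

import Mathlib

noncomputable section
namespace Stmt11

/-- The multivariable power series ring `ℚ[[x₁,…,x_3]]`. -/
abbrev R := MvPowerSeries (Fin 3) ℚ

/-- The constant `a` in `R`. -/
def Cc (a : ℚ) : R := MvPowerSeries.C a

/-- The pairs `i < j`. -/
def pairs : Finset (Fin 3 × Fin 3) := Finset.univ.filter fun p => p.1 < p.2

/-- The Vandermonde element `Δ = ∏_{i<j}(x_i − x_j)`. -/
def Vand : R := ∏ p ∈ pairs, (MvPowerSeries.X p.1 - MvPowerSeries.X p.2)

/-- The weight vectors. -/
def ws : List (Fin 3 → ℕ) := [![1, 1, 0], ![1, 1, 0], ![1, 0, 1], ![1, 0, 1], ![0, 1, 1], ![0, 1, 1], ![1, 1, 1], ![1, 1, 1], ![1, 1, 1]]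

/-- `n = 7`. -/
def n : ℕ := 7

/-- The term `T_d` of the Vandermonde-quotient construction:
`T_d = ∏_{i<j}(x_i−x_j+d_i−d_j) · ∏_s ∏_{m=1}^{⟨wˢ,d⟩}(⟨wˢ,x⟩+m) · u_d⁻¹`. -/
def T (d : Fin 3 → ℕ) : R :=
  (∏ p ∈ pairs,
      (MvPowerSeries.X p.1 - MvPowerSeries.X p.2 + Cc ((d p.1 : ℚ) - (d p.2 : ℚ)))) *
    (ws.map fun w =>
      ∏ m ∈ Finset.Icc 1 (∑ j, w j * d j),
        ((∑ j, Cc ((w j : ℚ)) * MvPowerSeries.X j) + Cc (m : ℚ))).prod *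
    (∏ j, ∏ m ∈ Finset.Icc 1 (d j), (MvPowerSeries.X j + Cc (m : ℚ)) ^ n)⁻¹

/-- `F_δ = Σ_{d₁+⋯+d_k=δ} T_d`. -/
def F (δ : ℕ) : R :=
  ∑ d ∈ (Fintype.piFinset fun _ : Fin 3 => Finset.range (δ + 1)).filter
      (fun d => ∑ j, d j = δ), T d

/-- The Euler operator `θ = q·d/dq` on `ℚ[[q]]`. -/
def th (f : PowerSeries ℚ) : PowerSeries ℚ :=
  PowerSeries.mk fun d => (d : ℚ) * PowerSeries.coeff d f

/-!
Over a common denominator, `F δ` has a numerator which is alternating in the variables, because the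
weights are permuted by the symmetric group; hence `Δ` divides it. The value at `0` of the quotient
may then be computed by restricting `F δ` to a line `x = t a` with distinct `aᵢ` and dividing the
coefficient of `t ^ 3` by `Δ(a)`. Choosing the line inside `∑ᵢ xᵢ = 0` turns the two kinds of
factors `xᵢ + xⱼ + m` and `x₁ + x₂ + x₃ + m` into `-xₖ + m` and the constant `m`, so the summand
becomes a product of one-variable weights.

More generally let `ν₀ δ`, `ν₂ δ`, `ν₃ δ` be the values obtained after inserting `1`, `e₂ / δ ^ 2`,
`e₃ / δ ^ 3` in the summand, where `eₖ` is the elementary symmetric function of the `xᵢ + dᵢ`.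
Three antisymmetric polynomials give discrete divergences that relate the sums over two consecutive
simplices. The boundary terms vanish on the line to order greater than `3` and do not contribute.
The resulting first order system for `(ν₀, ν₂, ν₃)` implies a scalar recurrence for `ν₀`, which is
the Picard–Fuchs equation.
-/

section RisingFactorial

variable {A B : Type*} [CommRing A] [CommRing B]

/-- The rising factorial `(x + 1)(x + 2)⋯(x + k)`, the form in which the Pochhammer products of
I-functions occur. -/
def rise (x : A) (k : ℕ) : A := (ascPochhammer A k).eval (x + 1)

theorem rise_zero_right (x : A) : rise x 0 = 1 := by
  simp [rise]

theorem rise_zero_left (k : ℕ) : rise (0 : A) k = k.factorial := by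
  rw [rise, zero_add, ascPochhammer_eval_one]

theorem rise_succ (x : A) (k : ℕ) : rise x (k + 1) = rise x k * (x + (k + 1)) := by
  rw [rise, ascPochhammer_succ_eval, rise]
  ring

theorem rise_add (x : A) (k l : ℕ) : rise x (k + l) = rise x k * rise (x + k) l := by
  induction l with
  | zero => simp [rise_zero_right]
  | succ l ih =>
    rw [← add_assoc, rise_succ, ih, rise_succ]
    push_cast
    ring

theorem map_rise (f : A →+* B) (x : A) (k : ℕ) : f (rise x k) = rise (f x) k := by
  induction k with
  | zero => simp [rise_zero_right]
  | succ k ih => simp [rise_succ, ih]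

theorem prod_Icc_add_natCast (x : A) (k : ℕ) : ∏ m ∈ Finset.Icc 1 k, (x + m) = rise x k := by
  induction k with
  | zero => simp [rise_zero_right]
  | succ k ih => simp [Finset.prod_Icc_succ_top, ih, rise_succ]

end RisingFactorial

section Alternating

open MvPolynomial

variable {σ A : Type*} [CommRing A]

/-- The substitution `Xᵢ ↦ Xⱼ`, i.e. restriction of polynomial functions to the diagonal
`xᵢ = xⱼ`. -/
def identify [DecidableEq σ] (i j : σ) : MvPolynomial σ A →ₐ[A] MvPolynomial σ A :=
  aeval (Function.update X i (X j))

theorem prod_dvd_of_prime {ι M : Type*} [CommMonoidWithZero M] {s : Finset ι} {f : ι → M}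
    {m : M} (hf : ∀ a ∈ s, Prime (f a)) (hs : ∀ a ∈ s, ∀ b ∈ s, a ≠ b → ¬ f a ∣ f b)
    (hm : ∀ a ∈ s, f a ∣ m) : ∏ a ∈ s, f a ∣ m := by
  classical
  induction s using Finset.induction_on with
  | empty => simp
  | insert a s ha ih =>
    simp only [Finset.forall_mem_insert] at hf hs hm
    obtain ⟨c, rfl⟩ := ih hf.2 (fun b hb => (hs.2 b hb).2) hm.2
    have hfa : ¬ f a ∣ ∏ b ∈ s, f b := fun h => by
      obtain ⟨b, hb, hab⟩ := (hf.1.dvd_finsetProd_iff _).mp h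
      exact hs.1.2 b hb (ne_of_mem_of_not_mem hb ha).symm hab
    rw [Finset.prod_insert ha, mul_comm (f a)]
    exact mul_dvd_mul_left _ ((hf.1.dvd_or_dvd hm.1).resolve_left hfa)

theorem X_sub_X_dvd_iff [DecidableEq σ] {i j : σ} {p : MvPolynomial σ A} :
    X i - X j ∣ p ↔ identify i j p = 0 := by
  constructor
  · rintro ⟨q, rfl⟩
    rcases eq_or_ne j i with rfl | hij <;> simp [identify, *]
  · intro hp
    let π := Ideal.Quotient.mkₐ A (Ideal.span {(X i - X j : MvPolynomial σ A)})
    have hij : π (X i) = π (X j) :=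
      Ideal.Quotient.eq.mpr (Ideal.mem_span_singleton_self (X i - X j))
    have hπ : π.comp (identify i j) = π := by
      refine algHom_ext fun k => ?_
      rcases eq_or_ne k i with rfl | hk <;> simp [identify, *]
    rw [← Ideal.mem_span_singleton, ← Ideal.Quotient.eq_zero_iff_mem]
    change π p = 0
    rw [← hπ, AlgHom.comp_apply, hp, map_zero]

variable [IsDomain A]

theorem X_sub_X_prime {i j : σ} (hij : i ≠ j) : Prime (X i - X j : MvPolynomial σ A) := by
  classical
  refine ⟨sub_ne_zero.mpr fun h => hij (X_injective h), fun hu => ?_, fun p q hpq => ?_⟩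
  · exact one_ne_zero (α := MvPolynomial σ A) (by
      simpa using X_sub_X_dvd_iff.mp (isUnit_iff_dvd_one.mp hu))
  · simpa only [X_sub_X_dvd_iff, map_mul, mul_eq_zero] using hpq

theorem not_X_sub_X_dvd_X_sub_X [LinearOrder σ] {p q : σ × σ} (hp : p.1 < p.2) (hq : q.1 < q.2)
    (hpq : p ≠ q) : ¬ (X p.1 - X p.2 : MvPolynomial σ A) ∣ X q.1 - X q.2 := by
  intro h
  have key : (Function.update X p.1 (X p.2) : σ → MvPolynomial σ A) q.1 =
      Function.update X p.1 (X p.2) q.2 := by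
    simpa [identify, sub_eq_zero] using X_sub_X_dvd_iff.mp h
  simp only [Function.update_apply] at key
  split_ifs at key with h₁ h₂ h₂
  · exact absurd (h₁.trans h₂.symm) hq.ne
  · exact hpq (Prod.ext h₁.symm (X_injective key))
  · exact absurd (X_injective key ▸ h₂ ▸ hq) hp.not_gt
  · exact absurd (X_injective key) hq.ne

theorem X_sub_X_dvd_of_rename_swap [CharZero A] [DecidableEq σ] {i j : σ} {p : MvPolynomial σ A}
    (hp : rename (Equiv.swap i j) p = -p) : X i - X j ∣ p := by
  have hid : (identify i j).comp (rename (Equiv.swap i j)) = identify (A := A) i j := by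
    refine algHom_ext fun k => ?_
    simp only [AlgHom.comp_apply, rename_X, identify, aeval_X, Function.update_apply,
      Equiv.swap_apply_def]
    split_ifs <;> simp_all
  have h := congrArg (identify i j) hp
  rw [← AlgHom.comp_apply, hid, map_neg] at h
  exact X_sub_X_dvd_iff.mpr (self_eq_neg.mp h)

/-- An alternating polynomial vanishes on each diagonal, and the equations of distinct diagonals
are coprime. -/
theorem prod_X_sub_X_dvd_of_alternating [CharZero A] [LinearOrder σ] {s : Finset (σ × σ)}
    (hs : ∀ a ∈ s, a.1 < a.2) {p : MvPolynomial σ A}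
    (hp : ∀ i j, i ≠ j → rename (Equiv.swap i j) p = -p) :
    ∏ a ∈ s, (X a.1 - X a.2) ∣ p :=
  prod_dvd_of_prime (fun a ha => X_sub_X_prime (hs a ha).ne)
    (fun a ha b hb hab => not_X_sub_X_dvd_X_sub_X (hs a ha) (hs b hb) hab)
    fun a ha => X_sub_X_dvd_of_rename_swap (hp a.1 a.2 (hs a ha).ne)

end Alternating

section CommonDenominator

variable {A B : Type*} [CommRing A] [CommRing B]

/-- The Vandermonde product `∏_{i<j} (yᵢ - yⱼ)` in three variables. -/
def vdm (y : Fin 3 → A) : A := ∏ p ∈ pairs, (y p.1 - y p.2)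

theorem vdm_eq (y : Fin 3 → A) : vdm y = (y 0 - y 1) * (y 0 - y 2) * (y 1 - y 2) := by
  have hpairs : pairs = {(0, 1), (0, 2), (1, 2)} := by decide
  simp [vdm, hpairs, mul_assoc]

theorem vdm_comp_swap (y : Fin 3 → A) {i j : Fin 3} (hij : i ≠ j) :
    vdm (y ∘ Equiv.swap i j) = -vdm y := by
  simp only [vdm_eq, Function.comp_apply]
  fin_cases i <;> fin_cases j <;> simp [Equiv.swap_apply_def] at hij ⊢ <;> ring

theorem map_vdm (f : A →+* B) (y : Fin 3 → A) : f (vdm y) = vdm (f ∘ y) := by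
  simp [vdm]

theorem Vand_eq_vdm : Vand = vdm MvPowerSeries.X := rfl

/-- The numerator of `T d` at the point `x`. The weight `(1,1,0)` and its permutations are written
as `(1,1,1)` minus a unit vector, which makes the symmetry visible. -/
def numerator (x : Fin 3 → A) (d : Fin 3 → ℕ) : A :=
  vdm (fun i => x i + d i) *
    ((∏ i, rise (∑ j, x j - x i) (∑ j, d j - d i)) ^ 2 * rise (∑ j, x j) (∑ j, d j) ^ 3)

/-- The denominator `u_d` of `T d` at the point `x`. -/
def denominator (x : Fin 3 → A) (d : Fin 3 → ℕ) : A := ∏ i, rise (x i) (d i) ^ n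

/-- The factor by which `denominator x d` falls short of the common denominator
`denominator x (fun _ => δ)` of the `T d` with `∑ d = δ`. -/
def cofactor (x : Fin 3 → A) (δ : ℕ) (d : Fin 3 → ℕ) : A :=
  ∏ i, rise (x i + d i) (δ - d i) ^ n

/-- The numerator of `F δ` over the common denominator of its terms, at the point `x`. -/
def commonNumerator (x : Fin 3 → A) (δ : ℕ) : A :=
  ∑ d ∈ Finset.piAntidiag Finset.univ δ, numerator x d * cofactor x δ d

theorem map_numerator (f : A →+* B) (x : Fin 3 → A) (d : Fin 3 → ℕ) :
    f (numerator x d) = numerator (f ∘ x) d := by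
  simp [numerator, map_vdm, map_rise, Function.comp_def]

theorem map_denominator (f : A →+* B) (x : Fin 3 → A) (d : Fin 3 → ℕ) :
    f (denominator x d) = denominator (f ∘ x) d := by
  simp [denominator, map_rise]

theorem map_commonNumerator (f : A →+* B) (x : Fin 3 → A) (δ : ℕ) :
    f (commonNumerator x δ) = commonNumerator (f ∘ x) δ := by
  simp [commonNumerator, cofactor, map_numerator, map_rise]

theorem le_of_mem_piAntidiag {ι : Type*} [Fintype ι] [DecidableEq ι] {δ : ℕ} {d : ι → ℕ}
    (hd : d ∈ Finset.piAntidiag Finset.univ δ) (i : ι) : d i ≤ δ :=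
  (Finset.mem_piAntidiag.mp hd).1 ▸ Finset.single_le_sum (fun _ _ => Nat.zero_le _)
    (Finset.mem_univ i)

theorem denominator_mul_cofactor (x : Fin 3 → A) {δ : ℕ} {d : Fin 3 → ℕ}
    (hd : d ∈ Finset.piAntidiag Finset.univ δ) :
    denominator x d * cofactor x δ d = denominator x fun _ => δ := by
  simp only [denominator, cofactor, ← Finset.prod_mul_distrib, ← mul_pow, ← rise_add,
    Nat.add_sub_cancel' (le_of_mem_piAntidiag hd _)]

theorem numerator_comp_swap (x : Fin 3 → A) (d : Fin 3 → ℕ) {i j : Fin 3} (hij : i ≠ j) :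
    numerator (x ∘ Equiv.swap i j) (d ∘ Equiv.swap i j) = -numerator x d := by
  have hprod := Equiv.prod_comp (Equiv.swap i j)
    fun k => rise (∑ l, x l - x k) (∑ l, d l - d k)
  have hvdm := vdm_comp_swap (fun k => x k + d k) hij
  simp only [numerator, Function.comp_def, Equiv.sum_comp (Equiv.swap i j) x,
    Equiv.sum_comp (Equiv.swap i j) d] at hprod hvdm ⊢
  rw [hprod, hvdm, neg_mul]

theorem cofactor_comp_perm (x : Fin 3 → A) (δ : ℕ) (d : Fin 3 → ℕ) (e : Equiv.Perm (Fin 3)) :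
    cofactor (x ∘ e) δ (d ∘ e) = cofactor x δ d :=
  Equiv.prod_comp e fun k => rise (x k + d k) (δ - d k) ^ n

theorem commonNumerator_comp_swap (x : Fin 3 → A) (δ : ℕ) {i j : Fin 3} (hij : i ≠ j) :
    commonNumerator (x ∘ Equiv.swap i j) δ = -commonNumerator x δ := by
  rw [commonNumerator, commonNumerator, ← Finset.sum_neg_distrib]
  symm
  refine Finset.sum_equiv ((Equiv.swap i j).arrowCongr (Equiv.refl ℕ)) (fun d => ?_) fun d _ => ?_
  · simp [Equiv.arrowCongr, Equiv.sum_comp (Equiv.swap i j) d]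
  · change -_ = numerator (x ∘ _) (d ∘ Equiv.swap i j) * cofactor (x ∘ _) δ (d ∘ Equiv.swap i j)
    rw [numerator_comp_swap _ _ hij, cofactor_comp_perm, neg_mul]

theorem constantCoeff_denominator_X_ne_zero (d : Fin 3 → ℕ) :
    MvPowerSeries.constantCoeff (denominator (MvPowerSeries.X : Fin 3 → R) d) ≠ 0 := by
  rw [map_denominator]
  simp [denominator, rise_zero_left, Finset.prod_ne_zero_iff, Nat.factorial_ne_zero]

theorem T_eq (d : Fin 3 → ℕ) :
    T d = numerator MvPowerSeries.X d * (denominator MvPowerSeries.X d)⁻¹ := by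
  have hprod (x : R) (k : ℕ) : ∏ m ∈ Finset.Icc 1 k, (x + Cc m) = rise x k := by
    simpa [Cc] using prod_Icc_add_natCast x k
  have hvdm : ∏ p ∈ pairs, (MvPowerSeries.X p.1 - MvPowerSeries.X p.2 + Cc ((d p.1 : ℚ) - d p.2)) =
      vdm fun i => MvPowerSeries.X i + (d i : R) :=
    Finset.prod_congr rfl fun p _ => by
      simp only [Cc, map_sub, map_natCast]
      ring
  rw [T, numerator, denominator, hvdm]
  simp only [Finset.prod_pow, hprod]
  congr 2
  have hd₀ : d 0 + d 1 + d 2 - d 0 = d 1 + d 2 := by omega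
  have hd₁ : d 0 + d 1 + d 2 - d 1 = d 0 + d 2 := by omega
  simp only [ws, List.map_cons, List.map_nil, List.prod_cons, List.prod_nil, Cc,
    Fin.sum_univ_three, Fin.prod_univ_three, Matrix.cons_val, Nat.cast_zero, Nat.cast_one,
    map_zero, map_one, zero_mul, one_mul, zero_add, add_zero, mul_one, hd₀, hd₁,
    Nat.add_sub_cancel]
  ring_nf

theorem F_eq_sum_T (δ : ℕ) : F δ = ∑ d ∈ Finset.piAntidiag Finset.univ δ, T d := by
  refine Finset.sum_congr (Finset.ext fun d => ?_) fun _ _ => rfl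
  simp only [Finset.mem_filter, Fintype.mem_piFinset, Finset.mem_range, Finset.mem_piAntidiag,
    Finset.mem_univ, implies_true, and_true, and_iff_right_iff_imp]
  rintro rfl i
  exact Nat.lt_succ_of_le (Finset.single_le_sum (fun _ _ => Nat.zero_le _) (Finset.mem_univ i))

theorem denominator_mul_F (δ : ℕ) :
    denominator MvPowerSeries.X (fun _ => δ) * F δ = commonNumerator MvPowerSeries.X δ := by
  rw [F_eq_sum_T, Finset.mul_sum]
  refine Finset.sum_congr rfl fun d hd => ?_
  rw [T_eq, ← denominator_mul_cofactor _ hd]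
  linear_combination numerator MvPowerSeries.X d * cofactor MvPowerSeries.X δ d *
    MvPowerSeries.mul_inv_cancel _ (constantCoeff_denominator_X_ne_zero d)

theorem Vand_dvd_F (δ : ℕ) : Vand ∣ F δ := by
  have hpoly : vdm (MvPolynomial.X : Fin 3 → MvPolynomial (Fin 3) ℚ) ∣
      commonNumerator MvPolynomial.X δ := by
    refine prod_X_sub_X_dvd_of_alternating (fun p hp => (Finset.mem_filter.mp hp).2)
      fun i j hij => ?_
    have h := map_commonNumerator
      (MvPolynomial.rename (R := ℚ) (Equiv.swap i j)).toRingHom MvPolynomial.X δ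
    rw [← commonNumerator_comp_swap _ _ hij]
    simpa [Function.comp_def] using h
  have hX : MvPolynomial.coeToMvPowerSeries.ringHom ∘ MvPolynomial.X =
      (MvPowerSeries.X : Fin 3 → R) := funext fun i => MvPolynomial.coe_X i
  have hdvd := map_dvd (MvPolynomial.coeToMvPowerSeries.ringHom (σ := Fin 3) (R := ℚ)) hpoly
  rw [map_vdm, map_commonNumerator, hX, ← Vand_eq_vdm, ← denominator_mul_F] at hdvd
  have hunit : IsUnit (denominator (MvPowerSeries.X : Fin 3 → R) fun _ => δ) :=
    MvPowerSeries.isUnit_iff_constantCoeff.mpr (constantCoeff_denominator_X_ne_zero _).isUnit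
  exact hunit.dvd_mul_left.mp hdvd

end CommonDenominator

section Telescoping

open PowerSeries

variable {K ι : Type*} [Field K] [Fintype ι]

/-- The weight `∏_{m=1}^{δ-d} (m - x)^p / ∏_{m=1}^{d} (m + x)^r` attached to one coordinate of a
lattice point in the simplex of size `δ`. -/
def weight (p r : ℕ) (x : K⟦X⟧) (δ d : ℕ) : K⟦X⟧ :=
  rise (-x) (δ - d) ^ p * (rise x d ^ r)⁻¹

/-- The value of `B` at the lattice point `d` translated by `x`, against the product of the weights
of the coordinates. -/
def weightedTerm (p r : ℕ) (x : ι → K⟦X⟧) (δ : ℕ)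
    (B : (ι → K⟦X⟧) → K⟦X⟧) (d : ι → ℕ) : K⟦X⟧ :=
  B (fun i => x i + d i) * ∏ i, weight p r (x i) δ (d i)

/-- The sum of the weighted values of `B` over the lattice points of the simplex of size `δ`. -/
def weightedSum [DecidableEq ι] (p r : ℕ) (x : ι → K⟦X⟧) (δ : ℕ)
    (B : (ι → K⟦X⟧) → K⟦X⟧) : K⟦X⟧ :=
  ∑ d ∈ Finset.piAntidiag Finset.univ δ, weightedTerm p r x δ B d

theorem le_of_sum_eq_of_ne_zero {δ : ℕ} {d : ι → ℕ}
    (hd : ∑ j, d j = δ + 1) {i j : ι} (hij : i ≠ j) (hi : d i ≠ 0) : d j ≤ δ := by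
  have := Finset.add_le_sum (fun _ _ => Nat.zero_le _) (Finset.mem_univ i) (Finset.mem_univ j) hij
    (f := d)
  omega

theorem weight_succ_left (p r : ℕ) (x : K⟦X⟧) {δ d : ℕ} (h : d ≤ δ) :
    weight p r x (δ + 1) d = (δ + 1 - (x + d)) ^ p * weight p r x δ d := by
  rw [weight, weight, Nat.succ_sub h, rise_succ, Nat.cast_sub h, mul_pow]
  ring

theorem add_pow_mul_weight_succ_succ [CharZero K] (p r : ℕ) {x : K⟦X⟧} (hx : constantCoeff x = 0)
    (δ d : ℕ) :
    (x + (d + 1 : ℕ)) ^ r * weight p r x (δ + 1) (d + 1) = weight p r x δ d := by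
  have hne : constantCoeff ((x + (d + 1 : K⟦X⟧)) ^ r) ≠ 0 := by
    rw [map_pow]
    exact pow_ne_zero r (by simpa [hx] using Nat.cast_add_one_ne_zero (R := K) d)
  push_cast
  rw [weight, weight, Nat.add_sub_add_right, rise_succ, mul_pow, PowerSeries.mul_inv_rev]
  linear_combination rise (-x) (δ - d) ^ p * (rise x d ^ r)⁻¹ * PowerSeries.mul_inv_cancel _ hne

/-- At most one factor fails to be a unit, the one with `d i = δ + 1` at a vertex of the
simplex. -/
theorem prod_sub_dvd_X [CharZero K] {x : ι → K⟦X⟧} (hx : ∀ i, Associated (x i) X)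
    {δ : ℕ} {d : ι → ℕ} (hd : ∑ j, d j = δ + 1) :
    ∏ j, (δ + 1 - (x j + d j)) ∣ (X : K⟦X⟧) := by
  classical
  have hunit (j : ι) (hj : d j ≤ δ) : IsUnit ((δ : K⟦X⟧) + 1 - (x j + d j)) := by
    have hx₀ : constantCoeff (x j) = 0 := X_dvd_iff.mp (hx j).symm.dvd
    have hne : (δ : K) + 1 - d j ≠ 0 := by
      rw [sub_ne_zero]
      exact_mod_cast (Nat.lt_succ_of_le hj).ne'
    rw [isUnit_iff_constantCoeff]
    simpa [hx₀] using hne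
  by_cases hvertex : ∃ i, d i = δ + 1
  · obtain ⟨i, hi⟩ := hvertex
    have hrest : IsUnit (∏ j ∈ Finset.univ.erase i, ((δ : K⟦X⟧) + 1 - (x j + d j))) :=
      IsUnit.prod_iff.mpr fun j hj => hunit j <|
        le_of_sum_eq_of_ne_zero hd (Finset.ne_of_mem_erase hj).symm (by omega)
    have hfactor : (δ : K⟦X⟧) + 1 - (x i + d i) = -x i := by
      rw [hi]
      push_cast
      ring
    rw [← Finset.mul_prod_erase _ _ (Finset.mem_univ i), hrest.mul_right_dvd, hfactor, neg_dvd]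
    exact (hx i).dvd
  · have hle (j : ι) : d j ≤ δ := by
      have := Finset.single_le_sum (f := d) (fun _ _ => Nat.zero_le _) (Finset.mem_univ j)
      have := not_exists.mp hvertex j
      omega
    exact (IsUnit.prod_iff.mpr fun j _ => hunit j (hle j)).dvd

theorem X_pow_dvd_of_prod_sub_pow_mul [CharZero K] {p r : ℕ} {x : ι → K⟦X⟧}
    (hx : ∀ i, Associated (x i) X) {δ : ℕ} {d : ι → ℕ} (hd : ∑ j, d j = δ + 1) {f : K⟦X⟧}
    (hf : X ^ r ∣ (∏ j, (δ + 1 - (x j + d j)) ^ p) * f) : X ^ (r - p) ∣ f := by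
  have hXf : X ^ r ∣ X ^ p * f := by
    rw [Finset.prod_pow] at hf
    exact hf.trans (mul_dvd_mul_right (pow_dvd_pow_of_dvd (prod_sub_dvd_X hx hd) p) f)
  rcases le_total r p with hrp | hpr
  · simp [Nat.sub_eq_zero_of_le hrp]
  · rwa [← Nat.add_sub_cancel' hpr, pow_add, mul_dvd_mul_iff_left (pow_ne_zero p X_ne_zero)] at hXf

variable [DecidableEq ι]

theorem sum_piAntidiag_succ_lower {M : Type*} [AddCommMonoid M] (δ : ℕ) (i : ι)
    (f : (ι → ℕ) → M) :
    (∑ d ∈ Finset.piAntidiag Finset.univ (δ + 1), if d i = 0 then 0 else f (d - Pi.single i 1)) =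
      ∑ z ∈ Finset.piAntidiag Finset.univ δ, f z := by
  have hup (z : ι → ℕ) : ∑ j, (z + Pi.single i 1 : ι → ℕ) j = ∑ j, z j + 1 := by
    simp [Finset.sum_add_distrib]
  simp_rw [← ite_not (_ = 0)]
  rw [← Finset.sum_filter]
  refine (Finset.sum_bij (fun z _ => z + Pi.single i 1) ?_ ?_ ?_ ?_).symm
  · intro z hz
    simp_all
  · intro z _ w _ h
    exact add_right_cancel h
  · intro d hd
    have hle : Pi.single i 1 ≤ d := fun j => by
      rcases eq_or_ne j i with rfl | hj
      · simpa using Nat.one_le_iff_ne_zero.mpr (Finset.mem_filter.mp hd).2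
      · simp [hj]
    refine ⟨d - Pi.single i 1, ?_, tsub_add_cancel_of_le hle⟩
    have := hup (d - Pi.single i 1)
    rw [tsub_add_cancel_of_le hle] at this
    simp_all
  · simp

theorem prod_weight_lower [CharZero K] (p r : ℕ) {x : ι → K⟦X⟧} (hx : ∀ i, constantCoeff (x i) = 0)
    {δ : ℕ} {d : ι → ℕ} (hd : ∑ j, d j = δ + 1) {i : ι} (hi : d i ≠ 0) :
    (∏ j, (δ + 1 - (x j + d j)) ^ p) * ∏ j, weight p r (x j) δ ((d - Pi.single i 1 : ι → ℕ) j) =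
      (x i + d i) ^ r * (δ + 1 - (x i + d i)) ^ p * ∏ j, weight p r (x j) (δ + 1) (d j) := by
  have hrest : ∏ j ∈ Finset.univ.erase i,
        ((δ + 1 - (x j + d j)) ^ p * weight p r (x j) δ ((d - Pi.single i 1 : ι → ℕ) j)) =
      ∏ j ∈ Finset.univ.erase i, weight p r (x j) (δ + 1) (d j) := by
    refine Finset.prod_congr rfl fun j hj => ?_
    have hji := Finset.ne_of_mem_erase hj
    rw [weight_succ_left p r (x j) (le_of_sum_eq_of_ne_zero hd hji.symm hi)]
    simp [hji]
  have hlower := add_pow_mul_weight_succ_succ p r (hx i) δ (d i - 1)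
  rw [Nat.sub_add_cancel (Nat.one_le_iff_ne_zero.mpr hi)] at hlower
  have hdi : (d - Pi.single i 1 : ι → ℕ) i = d i - 1 := by simp
  rw [← Finset.prod_mul_distrib, ← Finset.mul_prod_erase _ _ (Finset.mem_univ i), hrest, hdi,
    ← hlower, ← Finset.mul_prod_erase _ _ (Finset.mem_univ i)]
  ring

/-- Pointwise divergence theorem: after multiplication by `∏ⱼ (δ + 1 - yⱼ) ^ p` only the boundary
terms, those with `d i = 0`, are left, and each carries the factor `(x i) ^ r`. -/
theorem X_pow_dvd_sub_sum_lower [CharZero K] {p r : ℕ} {x : ι → K⟦X⟧}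
    (hx : ∀ i, Associated (x i) X) (hsum : ∑ i, x i = 0) {δ : ℕ} {d : ι → ℕ}
    (hd : ∑ j, d j = δ + 1) {B : (ι → K⟦X⟧) → K⟦X⟧} {Φ : ι → (ι → K⟦X⟧) → K⟦X⟧}
    (h : ∀ y : ι → K⟦X⟧, ∑ i, y i = δ + 1 →
      ∑ i, y i ^ r * (δ + 1 - y i) ^ p * Φ i (y - Pi.single i 1) =
        B y * ∏ i, (δ + 1 - y i) ^ p) :
    X ^ (r - p) ∣ weightedTerm p r x (δ + 1) B d -
      ∑ i, if d i = 0 then 0 else weightedTerm p r x δ (Φ i) (d - Pi.single i 1) := by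
  have hx₀ (i : ι) : constantCoeff (x i) = 0 := X_dvd_iff.mp (hx i).symm.dvd
  refine X_pow_dvd_of_prod_sub_pow_mul hx hd ?_
  have hy : ∑ i, (x i + d i) = (δ : K⟦X⟧) + 1 := by
    rw [Finset.sum_add_distrib, hsum, zero_add]
    exact_mod_cast congrArg (Nat.cast : ℕ → K⟦X⟧) hd
  simp only [weightedTerm]
  rw [mul_sub, ← mul_assoc, mul_comm _ (B _), ← h _ hy, Finset.sum_mul, Finset.mul_sum,
    ← Finset.sum_sub_distrib]
  refine Finset.dvd_sum fun i _ => ?_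
  split_ifs with hi
  · simp only [hi, Nat.cast_zero, add_zero, mul_zero, sub_zero, mul_assoc]
    exact (pow_dvd_pow_of_dvd (hx i).symm.dvd r).mul_right _
  · have hshift : (fun j => x j + d j) - Pi.single i 1 =
        fun j => x j + ((d - Pi.single i 1 : ι → ℕ) j : K⟦X⟧) := by
      ext1 j
      rcases eq_or_ne j i with rfl | hj
      · simp [Nat.cast_pred (Nat.pos_of_ne_zero hi), add_sub_assoc]
      · simp [hj]
    rw [mul_left_comm _ (Φ i _), prod_weight_lower p r hx₀ hd hi, hshift]
    convert dvd_zero _ using 1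
    ring

theorem X_pow_dvd_weightedSum_succ_sub [CharZero K] {p r : ℕ} {x : ι → K⟦X⟧}
    (hx : ∀ i, Associated (x i) X) (hsum : ∑ i, x i = 0) {δ : ℕ}
    {B : (ι → K⟦X⟧) → K⟦X⟧} {Φ : ι → (ι → K⟦X⟧) → K⟦X⟧}
    (h : ∀ y : ι → K⟦X⟧, ∑ i, y i = δ + 1 →
      ∑ i, y i ^ r * (δ + 1 - y i) ^ p * Φ i (y - Pi.single i 1) =
        B y * ∏ i, (δ + 1 - y i) ^ p) :
    X ^ (r - p) ∣ weightedSum p r x (δ + 1) B - weightedSum p r x δ fun y => ∑ i, Φ i y := by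
  have hlower : weightedSum p r x δ (fun y => ∑ i, Φ i y) =
      ∑ d ∈ Finset.piAntidiag Finset.univ (δ + 1),
        ∑ i, if d i = 0 then 0 else weightedTerm p r x δ (Φ i) (d - Pi.single i 1) := by
    rw [Finset.sum_comm]
    simp only [sum_piAntidiag_succ_lower, weightedSum]
    rw [Finset.sum_comm]
    simp only [weightedTerm, Finset.sum_mul]
  rw [hlower, weightedSum, ← Finset.sum_sub_distrib]
  exact Finset.dvd_sum fun d hd =>
    X_pow_dvd_sub_sum_lower hx hsum (Finset.mem_piAntidiag.mp hd).1 h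

end Telescoping

section Line

open PowerSeries

variable {σ K : Type*} [Field K]

/-- The parametrisation `t ↦ t • a` of the line with direction `a`. -/
def line (a : σ → K) (i : σ) : K⟦X⟧ := C (a i) * X

theorem associated_line_X {a : σ → K} (ha : ∀ i, a i ≠ 0) (i : σ) : Associated (line a i) X :=
  associated_unit_mul_left X _ ((ha i).isUnit.map C)

theorem constantCoeff_line (a : σ → K) (i : σ) : constantCoeff (line a i) = 0 := by
  simp [line]

theorem sum_line [Fintype σ] {a : σ → K} (ha : ∑ i, a i = 0) : ∑ i, line a i = 0 := by
  simp only [line, ← Finset.sum_mul, ← map_sum, ha, map_zero, zero_mul]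

variable [Finite σ]

theorem hasSubst_line (a : σ → K) :
    MvPowerSeries.HasSubst (line a : σ → MvPowerSeries Unit K) :=
  MvPowerSeries.hasSubst_of_constantCoeff_zero (constantCoeff_line a)

/-- Restriction of power series to the line with direction `a`. -/
def restrictLine (a : σ → K) : MvPowerSeries σ K →ₐ[K] K⟦X⟧ :=
  MvPowerSeries.substAlgHom (hasSubst_line a)

theorem restrictLine_X (a : σ → K) (i : σ) : restrictLine a (MvPowerSeries.X i) = line a i :=
  MvPowerSeries.substAlgHom_X (hasSubst_line a) i

theorem constantCoeff_restrictLine (a : σ → K) (f : MvPowerSeries σ K) :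
    constantCoeff (restrictLine a f) = MvPowerSeries.constantCoeff f := by
  have h := MvPowerSeries.constantCoeff_subst_eq_zero (hasSubst_line a) (constantCoeff_line a)
    (f := f - MvPowerSeries.C (MvPowerSeries.constantCoeff f)) (by simp)
  rw [← MvPowerSeries.substAlgHom_apply (hasSubst_line a), map_sub, map_sub, sub_eq_zero] at h
  have hC := (restrictLine a).commutes (MvPowerSeries.constantCoeff f)
  exact h.trans ((congrArg constantCoeff hC).trans (constantCoeff_C _))

theorem restrictLine_inv (a : σ → K) {f : MvPowerSeries σ K}
    (hf : MvPowerSeries.constantCoeff f ≠ 0) : restrictLine a f⁻¹ = (restrictLine a f)⁻¹ := by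
  rw [PowerSeries.eq_inv_iff_mul_eq_one (by rwa [constantCoeff_restrictLine]), ← map_mul,
    MvPowerSeries.inv_mul_cancel _ hf, map_one]

theorem restrictLine_comp_X (a : σ → K) : restrictLine a ∘ MvPowerSeries.X = line a :=
  funext (restrictLine_X a)

theorem vdm_line (a : Fin 3 → ℚ) : vdm (line a) = C (vdm a) * X ^ 3 := by
  simp only [vdm_eq, line, map_mul, map_sub]
  ring

theorem restrictLine_Vand (a : Fin 3 → ℚ) : restrictLine a Vand = C (vdm a) * X ^ 3 := by
  rw [Vand_eq_vdm, ← vdm_line, ← restrictLine_comp_X]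
  exact map_vdm (restrictLine a).toRingHom _

/-- On the plane `∑ᵢ xᵢ = 0` the weight `(1,1,1)` contributes only constants, and the other
numerator weights become `-xᵢ`. -/
theorem restrictLine_T {a : Fin 3 → ℚ} (ha : ∑ i, a i = 0) {δ : ℕ} {d : Fin 3 → ℕ}
    (hd : ∑ i, d i = δ) :
    restrictLine a (T d) = C ((δ.factorial : ℚ) ^ 3) * weightedTerm 2 7 (line a) δ vdm d := by
  have hnum : restrictLine a (numerator MvPowerSeries.X d) = numerator (line a) d := by
    rw [← restrictLine_comp_X]
    exact map_numerator (restrictLine a).toRingHom _ _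
  have hden : restrictLine a (denominator MvPowerSeries.X d) = denominator (line a) d := by
    rw [← restrictLine_comp_X]
    exact map_denominator (restrictLine a).toRingHom _ _
  have hinv : (denominator (line a) d)⁻¹ = ∏ i, (rise (line a i) (d i) ^ 7)⁻¹ := by
    simp only [denominator, n, Fin.prod_univ_three, PowerSeries.mul_inv_rev]
    ring
  rw [T_eq, map_mul, restrictLine_inv a (constantCoeff_denominator_X_ne_zero d), hnum, hden, hinv]
  simp only [numerator, sum_line ha, hd, zero_sub, rise_zero_left, weightedTerm, weight,
    Finset.prod_mul_distrib, Finset.prod_pow, map_pow, map_natCast]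
  ring

theorem restrictLine_F {a : Fin 3 → ℚ} (ha : ∑ i, a i = 0) (δ : ℕ) :
    restrictLine a (F δ) = C ((δ.factorial : ℚ) ^ 3) * weightedSum 2 7 (line a) δ vdm := by
  rw [F_eq_sum_T, map_sum, weightedSum, Finset.mul_sum]
  exact Finset.sum_congr rfl fun d hd => restrictLine_T ha (Finset.mem_piAntidiag.mp hd).1

theorem vdm_mul_constantCoeff_of_F_eq {a : Fin 3 → ℚ} (ha : ∑ i, a i = 0) {δ : ℕ} {G : R}
    (hG : F δ = Vand * G) :
    vdm a * MvPowerSeries.constantCoeff G =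
      (δ.factorial : ℚ) ^ 3 * coeff 3 (weightedSum 2 7 (line a) δ vdm) := by
  rw [← coeff_C_mul, ← restrictLine_F ha, hG, map_mul, restrictLine_Vand, mul_assoc, coeff_C_mul,
    coeff_X_pow_mul', if_pos le_rfl, Nat.sub_self, coeff_zero_eq_constantCoeff_apply,
    constantCoeff_restrictLine]

end Line

section Moments

open PowerSeries

/-- A direction in the plane `∑ᵢ xᵢ = 0` with distinct nonzero entries. -/
def direction : Fin 3 → ℚ := ![1, 2, -3]

theorem sum_direction : ∑ i, direction i = 0 := by
  simp [direction, Fin.sum_univ_three]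
  norm_num

theorem direction_ne_zero (i : Fin 3) : direction i ≠ 0 := by
  fin_cases i <;> simp [direction]

theorem vdm_direction_ne_zero : vdm direction ≠ 0 := by
  simp only [vdm_eq, direction, Matrix.cons_val]
  norm_num

/-- The value at `0` of `∑_{|d| = δ} T_d · f(x + d) / Δ` for symmetric `f`, computed along the line
with direction `direction`: there `Δ` has order `3`. -/
def moment (f : (Fin 3 → ℚ⟦X⟧) → ℚ⟦X⟧) (δ : ℕ) : ℚ :=
  (δ.factorial : ℚ) ^ 3 / vdm direction *
    coeff 3 (weightedSum 2 7 (line direction) δ fun y => vdm y * f y)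

theorem moment_add (f g : (Fin 3 → ℚ⟦X⟧) → ℚ⟦X⟧) (δ : ℕ) :
    moment (fun y => f y + g y) δ = moment f δ + moment g δ := by
  simp only [moment, weightedSum, weightedTerm, mul_add, add_mul, Finset.sum_add_distrib, map_add]

theorem moment_C_mul (c : ℚ) (f : (Fin 3 → ℚ⟦X⟧) → ℚ⟦X⟧) (δ : ℕ) :
    moment (fun y => C c * f y) δ = c * moment f δ := by
  simp only [moment, weightedSum, weightedTerm, mul_left_comm _ (C c), mul_assoc,
    ← Finset.mul_sum, coeff_C_mul]
  ring

theorem moment_zero (f : (Fin 3 → ℚ⟦X⟧) → ℚ⟦X⟧) :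
    moment f 0 = constantCoeff (f (line direction)) := by
  have hw : weightedSum 2 7 (line direction) 0 (fun y => vdm y * f y) =
      C (vdm direction) * (X ^ 3 * f (line direction)) := by
    simp [weightedSum, weightedTerm, weight, rise_zero_right, vdm_line, mul_assoc]
  rw [moment, hw, coeff_C_mul, coeff_X_pow_mul', if_pos le_rfl, Nat.sub_self,
    coeff_zero_eq_constantCoeff_apply]
  field_simp [vdm_direction_ne_zero]
  simp

variable {A : Type*} [CommRing A]

/-- The second elementary symmetric function of three variables. -/
def e₂ (y : Fin 3 → A) : A := y 0 * y 1 + y 0 * y 2 + y 1 * y 2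

/-- The third elementary symmetric function of three variables. -/
def e₃ (y : Fin 3 → A) : A := y 0 * y 1 * y 2

/-- The moment of `1`. -/
def ν₀ (δ : ℕ) : ℚ := moment (fun _ => 1) δ

/-- The moment of `e₂`, normalised by its degree in `δ`. At `δ = 0` the division is harmless, as
`moment e₂ 0 = 0`. -/
def ν₂ (δ : ℕ) : ℚ := moment e₂ δ / δ ^ 2

/-- The moment of `e₃`, normalised by its degree in `δ`. At `δ = 0` the division is harmless, as
`moment e₃ 0 = 0`. -/
def ν₃ (δ : ℕ) : ℚ := moment e₃ δ / δ ^ 3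

theorem moment_e₂ (δ : ℕ) : moment e₂ δ = δ ^ 2 * ν₂ δ := by
  rcases eq_or_ne δ 0 with rfl | hδ
  · simp [moment_zero, e₂, constantCoeff_line]
  · rw [ν₂, mul_div_cancel₀]
    positivity

theorem moment_e₃ (δ : ℕ) : moment e₃ δ = δ ^ 3 * ν₃ δ := by
  rcases eq_or_ne δ 0 with rfl | hδ
  · simp [moment_zero, e₃, constantCoeff_line]
  · rw [ν₃, mul_div_cancel₀]
    positivity

theorem constantCoeff_eq_ν₀ {δ : ℕ} {G : R} (hG : F δ = Vand * G) :
    MvPowerSeries.constantCoeff G = ν₀ δ := by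
  have h := vdm_mul_constantCoeff_of_F_eq sum_direction hG
  rw [ν₀, moment, div_mul_eq_mul_div, eq_div_iff vdm_direction_ne_zero, mul_comm, h]
  simp only [mul_one]

/-- The polynomial identities by which the antisymmetric function `P` telescopes the sum of
`Δ · (b₀ (N+1)³ + b₂ (N+1) e₂ + b₃ e₃)` over the simplex of size `N + 1` to the sum of `Δ · c f`
over the simplex of size `N`. The component of the vector field in direction `i` is
`P (y (i+1)) (y (i+2)) (y i)`. -/
structure IsCertificate (N b₀ b₂ b₃ c : A) (f : (Fin 3 → A) → A) (P : A → A → A → A) : Prop where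
  divergence (y : Fin 3 → A) (hy : ∑ i, y i = N + 1) :
    ∑ i, y i ^ 7 * (N + 1 - y i) ^ 2 * P (y (i + 1)) (y (i + 2)) (y i - 1) =
      vdm y * (b₀ * (N + 1) ^ 3 + b₂ * (N + 1) * e₂ y + b₃ * e₃ y) * ∏ i, (N + 1 - y i) ^ 2
  cyclic_sum (y : Fin 3 → A) (hy : ∑ i, y i = N) :
    ∑ i, P (y (i + 1)) (y (i + 2)) (y i) = vdm y * (c * f y)

theorem IsCertificate.coeff_weightedSum_eq {δ : ℕ} {b₀ b₂ b₃ c : ℚ⟦X⟧}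
    {f : (Fin 3 → ℚ⟦X⟧) → ℚ⟦X⟧} {P : ℚ⟦X⟧ → ℚ⟦X⟧ → ℚ⟦X⟧ → ℚ⟦X⟧}
    (h : IsCertificate (δ : ℚ⟦X⟧) b₀ b₂ b₃ c f P) :
    coeff 3 (weightedSum 2 7 (line direction) (δ + 1) fun y =>
        vdm y * (b₀ * (δ + 1) ^ 3 + b₂ * (δ + 1) * e₂ y + b₃ * e₃ y)) =
      coeff 3 (weightedSum 2 7 (line direction) δ fun y => vdm y * (c * f y)) := by
  have hcyclic : weightedSum 2 7 (line direction) δ (fun y => vdm y * (c * f y)) =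
      weightedSum 2 7 (line direction) δ fun y => ∑ i, P (y (i + 1)) (y (i + 2)) (y i) := by
    refine Finset.sum_congr rfl fun d hd => ?_
    have hy : ∑ i, (line direction i + d i) = (δ : ℚ⟦X⟧) := by
      rw [Finset.sum_add_distrib, sum_line sum_direction, zero_add, ← Nat.cast_sum,
        (Finset.mem_piAntidiag.mp hd).1]
    rw [weightedTerm, weightedTerm, h.cyclic_sum _ hy]
  have hdvd := X_pow_dvd_weightedSum_succ_sub (p := 2) (r := 7)
    (associated_line_X direction_ne_zero) (sum_line sum_direction) (δ := δ)
    (Φ := fun i y => P (y (i + 1)) (y (i + 2)) (y i)) fun y hy => by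
      rw [← h.divergence y hy]
      refine Finset.sum_congr rfl fun i _ => ?_
      have h₁ : i + 1 ≠ i := by fin_cases i <;> decide
      have h₂ : i + 2 ≠ i := by fin_cases i <;> decide
      simp [h₁, h₂]
  rw [hcyclic]
  exact sub_eq_zero.mp (by simpa using X_pow_dvd_iff.mp hdvd 3 (by norm_num))

theorem IsCertificate.contiguity {δ : ℕ} {b₀ b₂ b₃ c : ℚ} {f : (Fin 3 → ℚ⟦X⟧) → ℚ⟦X⟧}
    {P : ℚ⟦X⟧ → ℚ⟦X⟧ → ℚ⟦X⟧ → ℚ⟦X⟧}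
    (h : IsCertificate (δ : ℚ⟦X⟧) (C b₀) (C b₂) (C b₃) (C c) f P) :
    b₀ * ν₀ (δ + 1) + b₂ * ν₂ (δ + 1) + b₃ * ν₃ (δ + 1) = c * moment f δ := by
  have hδ : (δ : ℚ) + 1 ≠ 0 := Nat.cast_add_one_ne_zero δ
  have hmoment : moment (fun y => C b₀ * (δ + 1) ^ 3 + C b₂ * (δ + 1) * e₂ y + C b₃ * e₃ y)
      (δ + 1) = (δ + 1) ^ 3 * (b₀ * ν₀ (δ + 1) + b₂ * ν₂ (δ + 1) + b₃ * ν₃ (δ + 1)) := by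
    have h₀ := moment_C_mul (b₀ * (δ + 1) ^ 3) (fun _ => 1) (δ + 1)
    have h₂ := moment_C_mul (b₂ * (δ + 1)) e₂ (δ + 1)
    simp only [map_mul, map_pow, map_add, map_natCast, map_one, mul_one] at h₀ h₂
    rw [moment_add, moment_add, h₀, h₂, moment_C_mul, moment_e₂, moment_e₃, ← ν₀]
    push_cast
    ring
  refine mul_left_cancel₀ (pow_ne_zero 3 hδ) ?_
  rw [← hmoment, ← moment_C_mul, moment, moment, h.coeff_weightedSum_eq, Nat.factorial_succ]
  push_cast
  ring

end Moments

section Certificates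

variable {A : Type*} [CommRing A]

/-- The certificate of degree three: it expresses the moment of `1` over the simplex of size `N`
through moments over the simplex of size `N + 1`. The coefficients of the certificates are the
solution of a linear system. -/
def cubicCert (N u v z : A) : A :=
  (u - v) * (3 * N + 2 + (3 * N + 1) * z - z ^ 2 + 4 * (u * v))

/-- The certificate of degree five: it expresses the moment of `e₂` over the simplex of size `N`
through moments over the simplex of size `N + 1`. -/
def quinticCert (N u v z : A) : A :=
  (u - v) *
    (-(30 * N ^ 3 + 71 * N ^ 2 + 63 * N + 16)
      - (30 * N ^ 3 - 23 * N ^ 2 - 6 * N - 1) * z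
      + (94 * N ^ 2 - 3 * N - 1) * z ^ 2 - (40 * N ^ 2 - 3 * N - 1) * (u * v)
      - 72 * N * z ^ 3 + (183 * N + 3) * z * (u * v)
      + 18 * z ^ 4 - 90 * z ^ 2 * (u * v) + 99 * (u * v) ^ 2)

/-- The certificate of degree seven: it expresses the moment of `e₃` over the simplex of size `N`
through moments over the simplex of size `N + 1`. -/
def septicCert (N u v z : A) : A :=
  (u - v) *
    (-(123 * N ^ 5 + 424 * N ^ 4 + 178 * N ^ 3 - 61 * N ^ 2 - 49 * N - 3)
      - (123 * N ^ 5 + 719 * N ^ 4 - 544 * N ^ 3 - 380 * N ^ 2 - 119 * N - 15) * z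
      - (295 * N ^ 4 - 2468 * N ^ 3 - 4 * N ^ 2 + 74 * N + 15) * z ^ 2
      - (164 * N ^ 4 + 902 * N ^ 3 - 77 * N ^ 2 - 74 * N - 15) * (u * v)
      + (1746 * N ^ 3 - 2574 * N ^ 2 - 108 * N) * z ^ 3
      - (894 * N ^ 3 - 3675 * N ^ 2 - 402 * N - 45) * z * (u * v)
      - (2259 * N ^ 2 - 1251 * N - 27) * z ^ 4
      + (4734 * N ^ 2 - 3339 * N - 135) * z ^ 2 * (u * v)
      - (558 * N ^ 2 - 765 * N - 27) * (u * v) ^ 2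
      + (1215 * N - 243) * z ^ 5 - (4779 * N - 1053) * z ^ 3 * (u * v)
      + (3564 * N - 810) * z * (u * v) ^ 2
      - 243 * z ^ 6 + 1458 * z ^ 4 * (u * v) - 2187 * z ^ 2 * (u * v) ^ 2 + 243 * (u * v) ^ 3)

theorem isCertificate_cubicCert (N : A) :
    IsCertificate N 2 (-5) 3 3 (fun _ => 1) (cubicCert N) where
  divergence y hy := by
    obtain rfl : N = ∑ i, y i - 1 := eq_sub_of_add_eq hy.symm
    simp only [cubicCert, vdm_eq, e₂, e₃, Fin.sum_univ_three, Fin.prod_univ_three, Fin.reduceAdd]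
    ring
  cyclic_sum y hy := by
    subst hy
    simp only [cubicCert, vdm_eq, Fin.sum_univ_three, Fin.reduceAdd]
    ring

theorem isCertificate_quinticCert (N : A) :
    IsCertificate N (10 * (N + 1) ^ 2 - 50 * (N + 1) + 24)
      (-(34 * (N + 1) ^ 2 - 125 * (N + 1) + 60)) (57 * (N + 1) ^ 2 - 75 * (N + 1) + 36) 81 e₂
      (quinticCert N) where
  divergence y hy := by
    obtain rfl : N = ∑ i, y i - 1 := eq_sub_of_add_eq hy.symm
    simp only [quinticCert, vdm_eq, e₂, e₃, Fin.sum_univ_three, Fin.prod_univ_three,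
      Fin.reduceAdd]
    ring
  cyclic_sum y hy := by
    subst hy
    simp only [quinticCert, vdm_eq, e₂, Fin.sum_univ_three, Fin.reduceAdd]
    ring

theorem isCertificate_septicCert (N : A) :
    IsCertificate N
      (41 * (N + 1) ^ 4 - 186 * (N + 1) ^ 3 + 358 * (N + 1) ^ 2 - 264 * (N + 1) + 54)
      (-(188 * (N + 1) ^ 4 - 618 * (N + 1) ^ 3 + 976 * (N + 1) ^ 2 - 660 * (N + 1) + 135))
      (420 * (N + 1) ^ 4 - 993 * (N + 1) ^ 3 + 915 * (N + 1) ^ 2 - 396 * (N + 1) + 81)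
      (729 * N) e₃ (septicCert N) where
  divergence y hy := by
    obtain rfl : N = ∑ i, y i - 1 := eq_sub_of_add_eq hy.symm
    simp only [septicCert, vdm_eq, e₂, e₃, Fin.sum_univ_three, Fin.prod_univ_three,
      Fin.reduceAdd]
    ring
  cyclic_sum y hy := by
    subst hy
    simp only [septicCert, vdm_eq, e₃, Fin.sum_univ_three, Fin.reduceAdd]
    ring

end Certificates

section Recurrence

open PowerSeries

theorem ν₀_contiguity (δ : ℕ) :
    2 * ν₀ (δ + 1) - 5 * ν₂ (δ + 1) + 3 * ν₃ (δ + 1) = 3 * ν₀ δ := by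
  have h := IsCertificate.contiguity (δ := δ) (b₀ := 2) (b₂ := -5) (b₃ := 3) (c := 3)
    (by simpa only [map_neg, map_ofNat] using isCertificate_cubicCert _)
  rw [← ν₀] at h
  linear_combination h

theorem ν₂_contiguity (δ : ℕ) :
    (10 * (δ + 1) ^ 2 - 50 * (δ + 1) + 24) * ν₀ (δ + 1) -
        (34 * (δ + 1) ^ 2 - 125 * (δ + 1) + 60) * ν₂ (δ + 1) +
        (57 * (δ + 1) ^ 2 - 75 * (δ + 1) + 36) * ν₃ (δ + 1) =
      81 * δ ^ 2 * ν₂ δ := by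
  have h := IsCertificate.contiguity (δ := δ) (b₀ := 10 * (δ + 1) ^ 2 - 50 * (δ + 1) + 24)
    (b₂ := -(34 * (δ + 1) ^ 2 - 125 * (δ + 1) + 60))
    (b₃ := 57 * (δ + 1) ^ 2 - 75 * (δ + 1) + 36) (c := 81)
    (by simpa only [map_add, map_sub, map_neg, map_mul, map_pow, map_ofNat, map_natCast, map_one]
      using isCertificate_quinticCert _)
  rw [moment_e₂] at h
  linear_combination h

theorem ν₃_contiguity (δ : ℕ) :
    (41 * (δ + 1) ^ 4 - 186 * (δ + 1) ^ 3 + 358 * (δ + 1) ^ 2 - 264 * (δ + 1) + 54) *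
          ν₀ (δ + 1) -
        (188 * (δ + 1) ^ 4 - 618 * (δ + 1) ^ 3 + 976 * (δ + 1) ^ 2 - 660 * (δ + 1) + 135) *
          ν₂ (δ + 1) +
        (420 * (δ + 1) ^ 4 - 993 * (δ + 1) ^ 3 + 915 * (δ + 1) ^ 2 - 396 * (δ + 1) + 81) *
          ν₃ (δ + 1) =
      729 * δ ^ 4 * ν₃ δ := by
  have h := IsCertificate.contiguity (δ := δ)
    (b₀ := 41 * (δ + 1) ^ 4 - 186 * (δ + 1) ^ 3 + 358 * (δ + 1) ^ 2 - 264 * (δ + 1) + 54)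
    (b₂ := -(188 * (δ + 1) ^ 4 - 618 * (δ + 1) ^ 3 + 976 * (δ + 1) ^ 2 - 660 * (δ + 1) + 135))
    (b₃ := 420 * (δ + 1) ^ 4 - 993 * (δ + 1) ^ 3 + 915 * (δ + 1) ^ 2 - 396 * (δ + 1) + 81)
    (c := 729 * δ)
    (by simpa only [map_add, map_sub, map_neg, map_mul, map_pow, map_ofNat, map_natCast, map_one]
      using isCertificate_septicCert _)
  rw [moment_e₃] at h
  linear_combination h

/-- The coefficient of `q ^ j` in the Picard–Fuchs operator, a polynomial in the Euler operator `θ`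
evaluated at its eigenvalue `k` on `q ^ k`. -/
def symbol (k : ℚ) : Fin 6 → ℚ
  | 0 => 3721 * k ^ 4
  | 1 => -(61 * (3029 * k ^ 4 + 5572 * k ^ 3 + 4677 * k ^ 2 + 1891 * k + 305))
  | 2 => 1215215 * k ^ 4 + 3428132 * k ^ 3 + 4267228 * k ^ 2 + 2572675 * k + 611586
  | 3 => -(81 * (39370 * k ^ 4 + 140178 * k ^ 3 + 206807 * k ^ 2 + 142191 * k + 37332))
  | 4 => 6561 * (566 * k ^ 4 + 2230 * k ^ 3 + 3356 * k ^ 2 + 2241 * k + 558)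
  | 5 => -(1594323 * (k + 1) ^ 4)

theorem ν₀_initial_values : ν₀ 0 = 1 ∧ ν₀ 1 = 5 ∧ ν₀ 2 = 69 ∧ ν₀ 3 = 1427 ∧ ν₀ 4 = 35749 := by
  have h₀ : ν₀ 0 = 1 := by simp [ν₀, moment_zero]
  have h₂ : ν₂ 0 = 0 := by simp [ν₂]
  have h₃ : ν₃ 0 = 0 := by simp [ν₃]
  have r (δ : ℕ) := And.intro (ν₀_contiguity δ) (And.intro (ν₂_contiguity δ) (ν₃_contiguity δ))
  obtain ⟨h₁₀, h₁₂, h₁₃⟩ : ν₀ 1 = 5 ∧ ν₂ 1 = 2 ∧ ν₃ 1 = 1 := by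
    have := r 0
    norm_num [h₀, h₂, h₃] at this
    refine ⟨?_, ?_, ?_⟩ <;> linarith
  obtain ⟨h₂₀, h₂₂, h₂₃⟩ : ν₀ 2 = 69 ∧ ν₂ 2 = 30 ∧ ν₃ 2 = 9 := by
    have := r 1
    norm_num [h₁₀, h₁₂, h₁₃] at this
    refine ⟨?_, ?_, ?_⟩ <;> linarith
  obtain ⟨h₃₀, h₃₂, h₃₃⟩ : ν₀ 3 = 1427 ∧ ν₂ 3 = 632 ∧ ν₃ 3 = 171 := by
    have := r 2
    norm_num [h₂₀, h₂₂, h₂₃] at this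
    refine ⟨?_, ?_, ?_⟩ <;> linarith
  have := r 3
  norm_num [h₃₀, h₃₂, h₃₃] at this
  refine ⟨h₀, h₁₀, h₂₀, h₃₀, ?_⟩
  linarith

theorem ν₀_recurrence (δ : ℕ) :
    ∑ j : Fin 6, symbol ((δ + 5 - j : ℕ) : ℚ) j * ν₀ (δ + 5 - j) = 0 := by
  have r₀ (k : ℕ) := ν₀_contiguity (δ + k)
  have r₂ (k : ℕ) := ν₂_contiguity (δ + k)
  have r₃ (k : ℕ) := ν₃_contiguity (δ + k)
  have hsub (j : ℕ) (hj : j ≤ 5) : δ + 5 - j = δ + (5 - j) := Nat.add_sub_assoc hj δ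
  push_cast at r₂ r₃
  simp only [Fin.sum_univ_six, symbol, Fin.coe_ofNat_eq_mod, Nat.reduceMod,
    hsub, Nat.reduceLeDiff, Nat.reduceSub]
  push_cast
  -- The multipliers eliminate `ν₂` and `ν₃` among the contiguity relations at `δ, …, δ + 4`.
  linear_combination
    531441 * (δ + 1) ^ 4 * r₀ 0
    + (-883548 * (δ + 1) ^ 4 - 4877010 * (δ + 1) ^ 3 - 7339572 * (δ + 1) ^ 2 - 4901067 * (δ + 1)
      - 1220346) * r₀ 1
    - 32805 * (δ + 1) ^ 2 * r₂ 1 + 2187 * r₃ 1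
    + (394497 * (δ + 2) ^ 4 + 3519450 * (δ + 2) ^ 3 + 5706261 * (δ + 2) ^ 2 + 3839157 * (δ + 2)
      + 1007964) * r₀ 2
    + (63234 * (δ + 2) ^ 2 + 21411 * (δ + 2) - 9882) * r₂ 2 - 4941 * r₃ 2
    + (3538 * (δ + 3) ^ 4 - 2838452 * (δ + 3) ^ 3 - 3916444 * (δ + 3) ^ 2 - 2572675 * (δ + 3)
      - 611586) / 3 * r₀ 3
    - (118279 * (δ + 3) ^ 2 + 47580 * (δ + 3) + 28304) / 3 * r₂ 3 + 3721 * r₃ 3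
    + (-163724 * (δ + 4) ^ 4 + 1041880 * (δ + 4) ^ 3 + 814899 * (δ + 4) ^ 2 + 346053 * (δ + 4)
      + 55815) / 9 * r₀ 4
    + (1905152 * (δ + 4) ^ 2 - 48373 * (δ + 4) + 89304) / 243 * r₂ 4 - 226981 / 243 * r₃ 4

theorem sum_symbol_mul_ν₀ (N : ℕ) :
    ∑ j : Fin 6, (if (j : ℕ) ≤ N then symbol ((N - j : ℕ) : ℚ) j * ν₀ (N - j) else 0) = 0 := by
  rcases lt_or_ge N 5 with hN | hN
  · obtain ⟨h₀, h₁, h₂, h₃, h₄⟩ := ν₀_initial_values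
    interval_cases N <;> norm_num [Fin.sum_univ_six, symbol, h₀, h₁, h₂, h₃, h₄]
  · obtain ⟨δ, rfl⟩ := Nat.exists_eq_add_of_le' hN
    rw [← ν₀_recurrence δ]
    exact Finset.sum_congr rfl fun j _ => if_pos (by omega)

end Recurrence

section PicardFuchs

open PowerSeries

/-- The Picard–Fuchs operator of the Calabi–Yau threefold. -/
def picardFuchs (I₀ : ℚ⟦X⟧) : ℚ⟦X⟧ :=
  3721 * th^[4] I₀
    - 61 * X *
      (3029 * th^[4] I₀ + 5572 * th^[3] I₀ + 4677 * th^[2] I₀ + 1891 * th I₀ + 305 * I₀)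
    + X ^ 2 *
      (1215215 * th^[4] I₀ + 3428132 * th^[3] I₀ + 4267228 * th^[2] I₀ + 2572675 * th I₀ +
        611586 * I₀)
    - 81 * X ^ 3 *
      (39370 * th^[4] I₀ + 140178 * th^[3] I₀ + 206807 * th^[2] I₀ + 142191 * th I₀ + 37332 * I₀)
    + 6561 * X ^ 4 *
      (566 * th^[4] I₀ + 2230 * th^[3] I₀ + 3356 * th^[2] I₀ + 2241 * th I₀ + 558 * I₀)
    - 1594323 * X ^ 5 * (fun g => th g + g)^[4] I₀

theorem coeff_th (f : ℚ⟦X⟧) (k : ℕ) : coeff k (th f) = k * coeff k f :=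
  coeff_mk k _

theorem coeff_picardFuchs (f : ℚ⟦X⟧) (N : ℕ) :
    coeff N (picardFuchs f) = ∑ j : Fin 6,
      if (j : ℕ) ≤ N then symbol ((N - j : ℕ) : ℚ) j * coeff (N - j) f else 0 := by
  have ofNat_eq_C (c : ℕ) [c.AtLeastTwo] :
      (OfNat.ofNat c : ℚ⟦X⟧) = C (OfNat.ofNat c : ℚ) := (map_ofNat C c).symm
  rw [picardFuchs, ← pow_one (X : ℚ⟦X⟧)]
  simp only [← pow_mul, one_mul, ofNat_eq_C, mul_assoc, map_add, map_sub, coeff_C_mul,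
    coeff_X_pow_mul', Function.iterate_succ_apply, Function.iterate_zero_apply, coeff_th]
  simp only [Fin.sum_univ_six, symbol, Fin.coe_ofNat_eq_mod, Nat.reduceMod, zero_le, if_true,
    Nat.sub_zero]
  split_ifs <;> ring

end PicardFuchs

/-- every `F_δ` is divisible by the Vandermonde `Δ`, and the series
`I₀ = Σ a_δ q^δ` with `a_δ = (F_δ/Δ)(0)` is annihilated by the stated
Picard–Fuchs operator. -/
theorem stmt_11 :
    (∀ δ : ℕ, ∃ G : R, F δ = Vand * G) ∧
    (∀ G : ℕ → R, (∀ δ : ℕ, F δ = Vand * G δ) →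
      ∀ I₀ : PowerSeries ℚ,
        I₀ = PowerSeries.mk (fun δ => MvPowerSeries.constantCoeff (G δ)) →
        3721 * th^[4] I₀ - 61 * PowerSeries.X * (3029 * th^[4] I₀ + 5572 * th^[3] I₀ + 4677 * th^[2] I₀ + 1891 * th I₀ + 305 * I₀) + PowerSeries.X ^ 2 * (1215215 * th^[4] I₀ + 3428132 * th^[3] I₀ + 4267228 * th^[2] I₀ + 2572675 * th I₀ + 611586 * I₀) - 81 * PowerSeries.X ^ 3 * (39370 * th^[4] I₀ + 140178 * th^[3] I₀ + 206807 * th^[2] I₀ + 142191 * th I₀ + 37332 * I₀) + 6561 * PowerSeries.X ^ 4 * (566 * th^[4] I₀ + 2230 * th^[3] I₀ + 3356 * th^[2] I₀ + 2241 * th I₀ + 558 * I₀) - 1594323 * PowerSeries.X ^ 5 * ((fun g => th g + g) ((fun g => th g + g) ((fun g => th g + g) ((fun g => th g + g) (I₀))))) = 0) := by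
  refine ⟨Vand_dvd_F, fun G hG I₀ hI₀ => ?_⟩
  have hcoeff (k : ℕ) : PowerSeries.coeff k I₀ = ν₀ k := by
    rw [hI₀, PowerSeries.coeff_mk, constantCoeff_eq_ν₀ (hG k)]
  change picardFuchs I₀ = 0
  ext N
  rw [coeff_picardFuchs, map_zero]
  simpa only [hcoeff] using sum_symbol_mul_ν₀ N

end Stmt11
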